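/- arXiv:1007.3910 — 2 statements merged into one kernel-verified Lean document; each statement's English description precedes it below -/
import Mathlib

section
/- Let μ be a probability measure on ℝ with μ([0,∞)) = 1 and mean a = ∫ x dμ(x) satisfying 0 < a < ∞, and let μ* denote its size-biased measure. Then the following are equivalent: (i) there exists a probability measure ν on ℝ with ν([0,∞)) = 1 such that μ* = μ ∗ ν (convolution); (ii) μ is infinitely divisible, i.e., for every positive integer n there exists a probability measure ρ on ℝ such that μ equals the n-fold convolution ρ ∗ ρ ∗ ⋯ ∗ ρ. -/
open MeasureTheory

/-- The size-biased measure of `μ`: `dμ*(x) = (x / ∫ y dμ(y)) dμ(x)`. -/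
noncomputable def sizeBiased (μ : Measure ℝ) : Measure ℝ :=
  μ.withDensity (fun x => ENNReal.ofReal (x / ∫ y, y ∂μ))

/-- Convolution of two measures on ℝ: pushforward of the product under addition. -/
noncomputable def mconv (μ ν : Measure ℝ) : Measure ℝ :=
  Measure.map (fun p : ℝ × ℝ => p.1 + p.2) (μ.prod ν)

/-- `convPow ρ n` is the `n`-fold convolution `ρ ∗ ⋯ ∗ ρ` (with `convPow ρ 0 = δ₀`). -/
noncomputable def convPow (ρ : Measure ℝ) : ℕ → Measure ℝ
  | 0 => Measure.dirac 0
  | n + 1 => mconv (convPow ρ n) ρ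

open Filter Topology Complex

lemma sb_mconv_eq (μ ν : Measure ℝ) : mconv μ ν = Measure.conv μ ν := rfl

instance sb_prob_mconv (μ ν : Measure ℝ) [IsProbabilityMeasure μ] [IsProbabilityMeasure ν] :
    IsProbabilityMeasure (mconv μ ν) := by
  rw [sb_mconv_eq]; infer_instance

instance sb_prob_convPow (ρ : Measure ℝ) [IsProbabilityMeasure ρ] (n : ℕ) :
    IsProbabilityMeasure (convPow ρ n) := by
  induction n with
  | zero => unfold convPow; infer_instance
  | succ n ih => unfold convPow; infer_instance

lemma sb_charFun_mconv (μ ν : Measure ℝ) [IsProbabilityMeasure μ] [IsProbabilityMeasure ν]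
    (t : ℝ) : charFun (mconv μ ν) t = charFun μ t * charFun ν t := by
  rw [sb_mconv_eq, charFun_conv]

lemma sb_charFun_convPow (ρ : Measure ℝ) [IsProbabilityMeasure ρ] (n : ℕ) (t : ℝ) :
    charFun (convPow ρ n) t = charFun ρ t ^ n := by
  induction n with
  | zero => simp [convPow, charFun_dirac]
  | succ n ih => rw [convPow, sb_charFun_mconv, ih, pow_succ]

/-- Derivative of the characteristic function. -/
lemma sb_hasDerivAt_charFun (μ : Measure ℝ) [IsFiniteMeasure μ] (h : Integrable id μ) (t : ℝ) :
    HasDerivAt (charFun μ) (I * ∫ x, x * cexp (t * x * I) ∂μ) t := by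
  have hm : MemLp id ((1 : ℕ) : ENNReal) μ := by
    simpa using memLp_one_iff_integrable.2 h
  have h1 := iteratedDeriv_charFun (t := t) hm
  have h2 := contDiff_charFun hm
  have h3 : DifferentiableAt ℝ (charFun μ) t :=
    (h2.differentiable (by simp)).differentiableAt
  rw [iteratedDeriv_one] at h1
  have h4 := h3.hasDerivAt
  rw [h1] at h4
  simpa using h4

lemma sb_ae_nonneg (μ : Measure ℝ) [IsProbabilityMeasure μ] (h : μ (Set.Ici 0) = 1) :
    ∀ᵐ x ∂μ, 0 ≤ x :=
  (mem_ae_iff_prob_eq_one measurableSet_Ici).2 h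

lemma sb_ae_nonneg' (μ : Measure ℝ) [IsProbabilityMeasure μ] (h : ∀ᵐ x ∂μ, 0 ≤ x) :
    μ (Set.Ici 0) = 1 :=
  (mem_ae_iff_prob_eq_one measurableSet_Ici).1 h

lemma sb_prob_sizeBiased (μ : Measure ℝ) [IsProbabilityMeasure μ] (h0 : ∀ᵐ x ∂μ, 0 ≤ x)
    (hint : Integrable id μ) (ha : 0 < ∫ x, x ∂μ) : IsProbabilityMeasure (sizeBiased μ) := by
  constructor
  rw [sizeBiased, withDensity_apply _ MeasurableSet.univ, Measure.restrict_univ,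
    ← ofReal_integral_eq_lintegral_ofReal]
  · rw [integral_div, div_self ha.ne', ENNReal.ofReal_one]
  · exact hint.div_const _
  · filter_upwards [h0] with x hx
    exact div_nonneg hx ha.le

lemma sb_charFun_sizeBiased (μ : Measure ℝ) [IsProbabilityMeasure μ] (h0 : ∀ᵐ x ∂μ, 0 ≤ x)
    (ha : 0 < ∫ x, x ∂μ) (t : ℝ) :
    ∫ x, x * cexp (t * x * I) ∂μ = ((∫ x, x ∂μ : ℝ) : ℂ) * charFun (sizeBiased μ) t := by
  rw [charFun_apply_real, sizeBiased, integral_withDensity_eq_integral_toReal_smul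
    (by fun_prop) (by simp), ← integral_const_mul]
  apply integral_congr_ae
  filter_upwards [h0] with x hx
  rw [ENNReal.toReal_ofReal (div_nonneg hx ha.le), real_smul]
  have : ((∫ x, x ∂μ : ℝ) : ℂ) ≠ 0 := by exact_mod_cast ha.ne'
  push_cast
  field_simp

lemma sb_hasDerivAt_charFun' (μ : Measure ℝ) [IsProbabilityMeasure μ] (h0 : ∀ᵐ x ∂μ, 0 ≤ x)
    (hint : Integrable id μ) (ha : 0 < ∫ x, x ∂μ) (t : ℝ) :
    HasDerivAt (charFun μ) (I * (((∫ x, x ∂μ : ℝ) : ℂ) * charFun (sizeBiased μ) t)) t := by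
  rw [← sb_charFun_sizeBiased μ h0 ha]
  exact sb_hasDerivAt_charFun μ hint t

/-- Lévy continuity theorem. -/
lemma sb_levy (μ : ℕ → Measure ℝ) (hμ : ∀ n, IsProbabilityMeasure (μ n)) (f : ℝ → ℂ)
    (hf : ContinuousAt f 0)
    (h : ∀ t, Tendsto (fun n => charFun (μ n) t) atTop (𝓝 (f t))) :
    ∃ ν : ProbabilityMeasure ℝ, (∀ t, charFun (ν : Measure ℝ) t = f t) ∧
      Tendsto (β := ProbabilityMeasure ℝ) (fun n => ⟨μ n, hμ n⟩) atTop (𝓝 ν) := by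
  have htight := isTightMeasureSet_of_tendsto_charFun hf h
  let P : ℕ → ProbabilityMeasure ℝ := fun n => ⟨μ n, hμ n⟩
  have hcomp : IsCompact (closure (Set.range P)) := by
    apply isCompact_closure_of_isTightMeasureSet
    convert htight using 1
    ext x
    constructor
    · rintro ⟨_, ⟨n, rfl⟩, rfl⟩
      exact ⟨n, rfl⟩
    · rintro ⟨n, rfl⟩
      exact ⟨P n, ⟨n, rfl⟩, rfl⟩
  obtain ⟨ν, -, s, hs, hlim⟩ := hcomp.tendsto_subseq (x := P)
    (fun n => subset_closure (Set.mem_range_self n))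
  have hch : ∀ t, charFun (ν : Measure ℝ) t = f t := fun t =>
    tendsto_nhds_unique (ProbabilityMeasure.tendsto_iff_tendsto_charFun.1 hlim t)
      ((h t).comp hs.tendsto_atTop)
  refine ⟨ν, hch, ?_⟩
  apply ProbabilityMeasure.tendsto_iff_tendsto_charFun.2
  intro t
  rw [hch]
  exact h t

/-- Compound Poisson laws. -/
lemma sb_compoundPoisson (l : Measure ℝ) [IsFiniteMeasure l] :
    ∃ ρ : Measure ℝ, IsProbabilityMeasure ρ ∧
      ∀ t, charFun ρ t = cexp (charFun l t - charFun l 0) := by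
  set c := l.real Set.univ with hc
  have hc0 : 0 ≤ c := measureReal_nonneg
  obtain ⟨N, hN⟩ := exists_nat_gt c
  let p : ℕ → Measure ℝ := fun m =>
    ENNReal.ofReal (1 - c / ((m + N : ℕ) : ℝ)) • Measure.dirac 0 +
      ENNReal.ofReal (1 / ((m + N : ℕ) : ℝ)) • l
  have hpos : ∀ m : ℕ, 0 < ((m + N : ℕ) : ℝ) := fun m => by
    push_cast
    have : (0 : ℝ) ≤ m := m.cast_nonneg
    linarith
  have hle : ∀ m : ℕ, 0 ≤ 1 - c / ((m + N : ℕ) : ℝ) := fun m => by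
    have h1 := hpos m
    have : c / ((m + N : ℕ) : ℝ) ≤ 1 := by
      rw [div_le_one h1]
      push_cast
      have : (0 : ℝ) ≤ m := m.cast_nonneg
      linarith
    linarith
  have hp : ∀ m, IsProbabilityMeasure (p m) := fun m => by
    constructor
    have hlu : l Set.univ = ENNReal.ofReal c := by
      rw [hc, measureReal_def, ENNReal.ofReal_toReal (measure_ne_top _ _)]
    have h1 := hpos m
    simp only [p, Measure.add_apply, Measure.smul_apply, smul_eq_mul, measure_univ, mul_one, hlu]
    rw [← ENNReal.ofReal_mul (by positivity), ← ENNReal.ofReal_add (hle m) (by positivity),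
      ← ENNReal.ofReal_one]
    congr 1
    field_simp
    ring
  have hch : ∀ m t, charFun (p m) t =
      1 + (charFun l t - charFun l 0) / ((m + N : ℕ) : ℂ) := fun m t => by
    have hi : ∀ (q : Measure ℝ) [IsFiniteMeasure q],
        Integrable (fun x : ℝ => cexp (t * x * I)) q := fun q _ => by
      refine Integrable.of_bound (C := 1) (by fun_prop) (ae_of_all _ fun x => ?_)
      rw [← ofReal_mul, norm_exp_ofReal_mul_I]
    have h1 := hpos m
    have h1' : ((m + N : ℕ) : ℂ) ≠ 0 := by exact_mod_cast h1.ne'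
    rw [charFun_apply_real, integral_add_measure ((hi _).smul_measure (by simp))
      ((hi _).smul_measure (by simp)), integral_smul_measure, integral_smul_measure,
      ← charFun_apply_real (μ := l), ENNReal.toReal_ofReal (hle m),
      ENNReal.toReal_ofReal (by positivity), integral_dirac, real_smul, real_smul,
      charFun_zero, ← hc]
    push_cast at h1' ⊢
    simp
    field_simp
    ring
  obtain ⟨ν, hν, -⟩ := sb_levy (fun m => convPow (p m) (m + N)) (fun m => inferInstance)
    (fun t => cexp (charFun l t - charFun l 0)) (by fun_prop) (fun t => by
      have := (Complex.tendsto_one_add_div_pow_exp (charFun l t - charFun l 0)).comp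
        (tendsto_add_atTop_nat N)
      refine this.congr fun m => ?_
      simp only [Function.comp]
      rw [sb_charFun_convPow, hch])
  exact ⟨ν, inferInstance, hν⟩

lemma sb_exists_exp (ν : Measure ℝ) [IsProbabilityMeasure ν] (h0 : ∀ᵐ x ∂ν, 0 ≤ x)
    (b : ℝ) (hb : 0 < b) :
    ∃ ρ : Measure ℝ, IsProbabilityMeasure ρ ∧
      ∀ t, charFun ρ t = cexp (I * b * ∫ s in (0 : ℝ)..t, charFun ν s) := by
  let e : ℕ → ℝ := fun k => 1 / ((k : ℝ) + 1)
  have he : ∀ k, 0 < e k := fun k => by positivity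
  let νk : ℕ → Measure ℝ := fun k => ν.map (fun x => x + e k)
  have hνp : ∀ k, IsProbabilityMeasure (νk k) := fun k =>
    Measure.isProbabilityMeasure_map (by fun_prop)
  have hνe : ∀ k, ∀ᵐ y ∂(νk k), e k ≤ y := fun k => by
    rw [ae_map_iff (by fun_prop) measurableSet_Ici]
    filter_upwards [h0] with x hx
    linarith
  let l : ℕ → Measure ℝ := fun k => (νk k).withDensity (fun y => ENNReal.ofReal (b / y))
  have hlf : ∀ k, IsFiniteMeasure (l k) := fun k => by
    apply isFiniteMeasure_withDensity
    apply ne_of_lt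
    calc ∫⁻ y, ENNReal.ofReal (b / y) ∂(νk k) ≤ ∫⁻ y, ENNReal.ofReal (b / e k) ∂(νk k) := by
          apply lintegral_mono_ae
          filter_upwards [hνe k] with y hy
          have := he k
          gcongr
      _ < ⊤ := by simp
  have hli : ∀ k, Integrable id (l k) := fun k => by
    rw [integrable_withDensity_iff (by fun_prop) (by simp)]
    refine Integrable.of_bound (C := b)
      (Measurable.aestronglyMeasurable (by fun_prop)) ?_
    filter_upwards [hνe k] with y hy
    have hy' : 0 < y := (he k).trans_le hy
    rw [ENNReal.toReal_ofReal (by positivity), id, mul_div_cancel₀ _ hy'.ne', Real.norm_eq_abs,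
      abs_of_pos hb]
  have hder : ∀ k t, HasDerivAt (charFun (l k)) (I * b * charFun (νk k) t) t := fun k t => by
    have := sb_hasDerivAt_charFun (l k) (hli k) t
    convert this using 1
    rw [mul_assoc]
    congr 1
    rw [integral_withDensity_eq_integral_toReal_smul (by fun_prop) (by simp), charFun_apply_real,
      ← integral_const_mul]
    apply integral_congr_ae
    filter_upwards [hνe k] with y hy
    have hy' : 0 < y := (he k).trans_le hy
    have hyc : (y : ℂ) ≠ 0 := by exact_mod_cast hy'.ne'
    rw [ENNReal.toReal_ofReal (by positivity), real_smul]
    push_cast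
    field_simp
  have hFT : ∀ k t, charFun (l k) t - charFun (l k) 0 =
      I * b * ∫ s in (0 : ℝ)..t, charFun (νk k) s := fun k t => by
    rw [← intervalIntegral.integral_const_mul]
    symm
    apply intervalIntegral.integral_eq_sub_of_hasDerivAt
    · intro s _; exact hder k s
    · apply Continuous.intervalIntegrable
      fun_prop
  choose ρ hρ hρc using fun k => sb_compoundPoisson (l k)
  have het : Tendsto e atTop (𝓝 0) := tendsto_one_div_add_atTop_nhds_zero_nat
  have hlim : ∀ s, Tendsto (fun k => charFun (νk k) s) atTop (𝓝 (charFun ν s)) := fun s => by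
    have h1 : ∀ k, charFun (νk k) s = charFun ν s * cexp (((e k * s : ℝ) : ℂ) * I) := fun k => by
      simp only [νk]
      rw [charFun_map_add_const]
      simp [mul_comm]
    simp_rw [h1]
    have : Tendsto (fun k => charFun ν s * cexp (((e k * s : ℝ) : ℂ) * I)) atTop
        (𝓝 (charFun ν s * cexp (((0 * s : ℝ) : ℂ) * I))) := by
      have hcont : Continuous (fun u : ℝ => charFun ν s * cexp (((u * s : ℝ) : ℂ) * I)) := by
        fun_prop
      exact (hcont.tendsto 0).comp het
    simpa using this
  have hcν : Continuous (charFun ν) := by fun_prop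
  obtain ⟨P, hP, -⟩ := sb_levy ρ hρ (fun t => cexp (I * b * ∫ s in (0 : ℝ)..t, charFun ν s))
    (by
      have : Continuous (fun t => ∫ s in (0 : ℝ)..t, charFun ν s) :=
        intervalIntegral.continuous_primitive (fun a b => hcν.intervalIntegrable a b) 0
      fun_prop)
    (fun t => by
      simp_rw [hρc, hFT]
      refine (Continuous.tendsto (f := fun z : ℂ => cexp (I * b * z)) (by fun_prop) _).comp ?_
      apply intervalIntegral.tendsto_integral_filter_of_dominated_convergence (fun _ => 1)
      · exact Eventually.of_forall fun k => (measurable_charFun).aestronglyMeasurable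
      · exact Eventually.of_forall fun k => ae_of_all _ fun s _ => norm_charFun_le_one s
      · simp
      · exact ae_of_all _ fun s _ => hlim s)
  exact ⟨P, inferInstance, hP⟩

lemma sb_forward (μ ν : Measure ℝ) [IsProbabilityMeasure μ] [IsProbabilityMeasure ν]
    (h0 : ∀ᵐ x ∂μ, 0 ≤ x) (hν : ∀ᵐ x ∂ν, 0 ≤ x) (hint : Integrable id μ)
    (ha : 0 < ∫ x, x ∂μ) (h : sizeBiased μ = mconv μ ν) (n : ℕ) (hn : 0 < n) :
    ∃ ρ : Measure ℝ, IsProbabilityMeasure ρ ∧ μ = convPow ρ n := by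
  set a := ∫ x, x ∂μ with ha'
  have hcν : Continuous (charFun ν) := by fun_prop
  let F : ℝ → ℂ := fun t => ∫ s in (0 : ℝ)..t, charFun ν s
  have hF : ∀ t, HasDerivAt F (charFun ν t) t := fun t =>
    intervalIntegral.integral_hasDerivAt_right (hcν.intervalIntegrable _ _)
      hcν.stronglyMeasurable.stronglyMeasurableAtFilter hcν.continuousAt
  have hμd : ∀ t, HasDerivAt (charFun μ) (I * (a * (charFun μ t * charFun ν t))) t := fun t => by
    rw [← sb_charFun_mconv, ← h]
    exact sb_hasDerivAt_charFun' μ h0 hint ha t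
  have hG : ∀ t, HasDerivAt (fun t => charFun μ t * cexp (-(I * a * F t))) 0 t := fun t => by
    have h1 := (hμd t).mul (((hF t).const_mul (I * (a : ℂ))).neg.cexp)
    refine h1.congr_deriv ?_
    change I * (a * (charFun μ t * charFun ν t)) * cexp (-(I * a * F t)) +
      charFun μ t * (cexp (-(I * a * F t)) * -(I * a * charFun ν t)) = 0
    ring
  have hconst : ∀ t, charFun μ t * cexp (-(I * a * F t)) = 1 := fun t => by
    have := is_const_of_deriv_eq_zero (f := fun t => charFun μ t * cexp (-(I * a * F t)))
      (fun t => (hG t).differentiableAt) (fun t => (hG t).deriv) t 0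
    simpa [F] using this
  have hexp : ∀ t, charFun μ t = cexp (I * a * F t) := fun t => by
    have := hconst t
    rw [Complex.exp_neg] at this
    have hne := Complex.exp_ne_zero (I * a * F t)
    field_simp at this
    exact this
  have hn' : (0 : ℝ) < n := by exact_mod_cast hn
  have hnc : (n : ℂ) ≠ 0 := by exact_mod_cast hn.ne'
  obtain ⟨ρ, hρ, hρc⟩ := sb_exists_exp ν hν (a / n) (by positivity)
  refine ⟨ρ, hρ, Measure.ext_of_charFun (funext fun t => ?_)⟩
  rw [sb_charFun_convPow, hρc, hexp, ← Complex.exp_nat_mul]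
  congr 1
  push_cast
  field_simp
  rfl

lemma sb_neg_pow (ρ : Measure ℝ) [IsProbabilityMeasure ρ] (n : ℕ) :
    ρ (Set.Iio 0) ^ n ≤ convPow ρ n (Set.Iic 0) := by
  induction n with
  | zero => simp [convPow]
  | succ n ih =>
    rw [convPow, mconv, Measure.map_apply (by fun_prop) measurableSet_Iic, pow_succ]
    calc ρ (Set.Iio 0) ^ n * ρ (Set.Iio 0)
        ≤ convPow ρ n (Set.Iic 0) * ρ (Set.Iio 0) := by gcongr
      _ = ((convPow ρ n).prod ρ) (Set.Iic 0 ×ˢ Set.Iio 0) := by rw [Measure.prod_prod]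
      _ ≤ _ := by
        apply measure_mono
        rintro ⟨x, y⟩ ⟨hx, hy⟩
        simp only [Set.mem_Iic, Set.mem_Iio, Set.mem_preimage] at *
        linarith

lemma sb_root_nonneg (ρ : Measure ℝ) [IsProbabilityMeasure ρ] (n : ℕ)
    (h : ∀ᵐ x ∂(convPow ρ (n + 1)), 0 ≤ x) : ∀ᵐ x ∂ρ, 0 ≤ x := by
  have h0 : convPow ρ (n + 1) (Set.Iio 0) = 0 := by
    rw [ae_iff] at h
    simpa [Set.Iio] using h
  have h1 : ρ (Set.Iio 0) ^ (n + 1) = 0 := by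
    apply le_antisymm _ zero_le
    rw [← h0, convPow, mconv, Measure.map_apply (by fun_prop) measurableSet_Iio, pow_succ]
    calc ρ (Set.Iio 0) ^ n * ρ (Set.Iio 0)
        ≤ convPow ρ n (Set.Iic 0) * ρ (Set.Iio 0) := by
          gcongr
          exact sb_neg_pow ρ n
      _ = ((convPow ρ n).prod ρ) (Set.Iic 0 ×ˢ Set.Iio 0) := by rw [Measure.prod_prod]
      _ ≤ _ := by
        apply measure_mono
        rintro ⟨x, y⟩ ⟨hx, hy⟩
        simp only [Set.mem_Iic, Set.mem_Iio, Set.mem_preimage] at *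
        linarith
  have h2 : ρ (Set.Iio 0) = 0 := pow_eq_zero_iff (by simp) |>.1 h1
  rw [ae_iff]
  simpa [Set.Iio] using h2

lemma sb_convPow_nonneg (ρ : Measure ℝ) [IsProbabilityMeasure ρ] (n : ℕ)
    (h : ∀ᵐ x ∂ρ, 0 ≤ x) : ∀ᵐ x ∂(convPow ρ n), 0 ≤ x := by
  induction n with
  | zero => simp [convPow, ae_dirac_eq]
  | succ n ih =>
    rw [convPow, mconv, ae_map_iff (by fun_prop) measurableSet_Ici]
    filter_upwards [Measure.quasiMeasurePreserving_fst.ae ih,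
      Measure.quasiMeasurePreserving_snd.ae h] with p h1 h2
    exact add_nonneg h1 h2

lemma sb_root_integrable (ρ : Measure ℝ) [IsProbabilityMeasure ρ] (n : ℕ)
    (h : ∀ᵐ x ∂ρ, 0 ≤ x) (hint : Integrable id (convPow ρ (n + 1))) : Integrable id ρ := by
  rw [convPow, mconv, integrable_map_measure (by fun_prop) (by fun_prop)] at hint
  have h1 : Integrable (id ∘ Prod.snd) ((convPow ρ n).prod ρ) := by
    refine hint.mono (by fun_prop) ?_
    filter_upwards [Measure.quasiMeasurePreserving_fst.ae (sb_convPow_nonneg ρ n h),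
      Measure.quasiMeasurePreserving_snd.ae h] with p h1 h2
    simp only [Function.comp, id, Real.norm_eq_abs]
    rw [abs_of_nonneg h2, abs_of_nonneg (add_nonneg h1 h2)]
    linarith
  rw [← integrable_map_measure (by fun_prop) (by fun_prop), Measure.map_snd_prod] at h1
  simpa using h1

lemma sb_charFun_near (ρ : Measure ℝ) [IsProbabilityMeasure ρ]
    (h : ∀ᵐ x ∂ρ, 0 ≤ x) (hint : Integrable id ρ) (t : ℝ) :
    ‖charFun ρ t - 1‖ ≤ |t| * ∫ x, x ∂ρ := by
  have hi : Integrable (fun x : ℝ => cexp (t * x * I)) ρ := by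
    refine Integrable.of_bound (C := 1) (by fun_prop) (ae_of_all _ fun x => ?_)
    rw [← ofReal_mul, norm_exp_ofReal_mul_I]
  have h1 : charFun ρ t - 1 = ∫ x : ℝ, (cexp (t * x * I) - 1) ∂ρ := by
    rw [integral_sub hi (integrable_const _), charFun_apply_real]
    simp
  rw [h1, ← integral_const_mul]
  refine norm_integral_le_of_norm_le (hint.const_mul |t|) ?_
  filter_upwards [h] with x hx
  have := Real.norm_exp_I_mul_ofReal_sub_one_le (x := t * x)
  rw [mul_comm I] at this
  push_cast at this
  refine this.trans ?_
  rw [Real.norm_eq_abs, abs_mul, abs_of_nonneg hx]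

lemma sb_backward (μ : Measure ℝ) [IsProbabilityMeasure μ]
    (h0 : ∀ᵐ x ∂μ, 0 ≤ x) (hint : Integrable id μ) (ha : 0 < ∫ x, x ∂μ)
    (h : ∀ n : ℕ, 0 < n → ∃ ρ : Measure ℝ, IsProbabilityMeasure ρ ∧ μ = convPow ρ n) :
    ∃ ν : Measure ℝ, IsProbabilityMeasure ν ∧ ν (Set.Ici 0) = 1 ∧
        sizeBiased μ = mconv μ ν := by
  set a := ∫ x, x ∂μ with ha'
  choose ρ hρ hμρ using fun n : ℕ => h (n + 1) n.succ_pos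
  have hr0 : ∀ n, ∀ᵐ x ∂(ρ n), 0 ≤ x := fun n =>
    sb_root_nonneg (ρ n) n (by rw [← hμρ]; exact h0)
  have hri : ∀ n, Integrable id (ρ n) := fun n =>
    sb_root_integrable (ρ n) n (hr0 n) (by rw [← hμρ]; exact hint)
  have hpow : ∀ n t, charFun μ t = charFun (ρ n) t ^ (n + 1) := fun n t => by
    conv_lhs => rw [hμρ n]
    rw [sb_charFun_convPow]
  have hd : ∀ (n : ℕ) (t : ℝ), I * ∫ x, x * cexp (t * x * I) ∂μ =
      ((n + 1 : ℕ) : ℂ) * charFun (ρ n) t ^ n * (I * ∫ x, x * cexp (t * x * I) ∂(ρ n)) := by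
    intro n t
    have h1 := sb_hasDerivAt_charFun μ hint t
    have h2 := (sb_hasDerivAt_charFun (ρ n) (hri n) t).pow (n + 1)
    rw [show charFun μ = charFun (ρ n) ^ (n + 1) from funext (hpow n)] at h1
    simpa using h1.unique h2
  have hmean : ∀ n : ℕ, a = ((n : ℝ) + 1) * ∫ x, x ∂(ρ n) := fun n => by
    have h1 := hd n 0
    simp only [ofReal_zero, zero_mul, Complex.exp_zero, mul_one, charFun_zero] at h1
    rw [integral_complex_ofReal (f := fun x : ℝ => x),
      integral_complex_ofReal (f := fun x : ℝ => x)] at h1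
    simp only [probReal_univ, ofReal_one, one_pow, mul_one] at h1
    have h2 : ((∫ x, x ∂μ : ℝ) : ℂ) = ((n : ℂ) + 1) * ((∫ x, x ∂(ρ n) : ℝ) : ℂ) := by
      apply mul_left_cancel₀ I_ne_zero
      push_cast at h1
      rw [h1]; ring
    exact_mod_cast h2
  have hmpos : ∀ n, 0 < ∫ x, x ∂(ρ n) := fun n => by
    have h1 := hmean n
    have h2 : (0 : ℝ) < (n : ℝ) + 1 := by positivity
    rw [h1] at ha
    exact pos_of_mul_pos_right ha h2.le
  have hsb : ∀ n t, charFun (sizeBiased μ) t * charFun (ρ n) t =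
      charFun μ t * charFun (sizeBiased (ρ n)) t := fun n t => by
    have h1 := hd n t
    rw [sb_charFun_sizeBiased μ h0 ha, sb_charFun_sizeBiased (ρ n) (hr0 n) (hmpos n), ← ha'] at h1
    have h3 : (a : ℂ) = ((n : ℂ) + 1) * ((∫ x, x ∂(ρ n) : ℝ) : ℂ) := by exact_mod_cast hmean n
    have hac : (a : ℂ) ≠ 0 := by exact_mod_cast ha.ne'
    apply mul_left_cancel₀ hac
    apply mul_left_cancel₀ I_ne_zero
    calc I * (a * (charFun (sizeBiased μ) t * charFun (ρ n) t))
        = (I * (a * charFun (sizeBiased μ) t)) * charFun (ρ n) t := by ring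
      _ = _ := by
        rw [h1, h3, hpow n]
        push_cast
        ring
  have hto1 : ∀ t, Tendsto (fun n => charFun (ρ n) t) atTop (𝓝 1) := fun t => by
    rw [tendsto_iff_norm_sub_tendsto_zero]
    have hz : Tendsto (fun n : ℕ => |t| * a * (1 / ((n : ℝ) + 1))) atTop (𝓝 0) := by
      simpa using tendsto_one_div_add_atTop_nhds_zero_nat.const_mul (|t| * a)
    refine squeeze_zero (fun _ => norm_nonneg _) (fun n => ?_) hz
    refine (sb_charFun_near (ρ n) (hr0 n) (hri n) t).trans (le_of_eq ?_)
    rw [hmean n]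
    field_simp
  have hne : ∀ t, charFun μ t ≠ 0 := fun t => by
    obtain ⟨n, hn⟩ := ((hto1 t).eventually_ne one_ne_zero).exists
    rw [hpow n]
    exact pow_ne_zero _ hn
  have hps : IsProbabilityMeasure (sizeBiased μ) := sb_prob_sizeBiased μ h0 hint ha
  have hpr : ∀ n, IsProbabilityMeasure (sizeBiased (ρ n)) := fun n =>
    sb_prob_sizeBiased (ρ n) (hr0 n) (hri n) (hmpos n)
  have hc1 : Continuous (charFun (sizeBiased μ)) := by fun_prop
  have hc2 : Continuous (charFun μ) := by fun_prop
  obtain ⟨ν, hν, hlim⟩ := sb_levy (fun n => sizeBiased (ρ n)) hpr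
    (fun t => charFun (sizeBiased μ) t / charFun μ t)
    (hc1.continuousAt.div hc2.continuousAt (hne 0)) (fun t => by
      have h1 : ∀ n, charFun (sizeBiased (ρ n)) t =
          charFun (sizeBiased μ) t * charFun (ρ n) t / charFun μ t := fun n => by
        rw [hsb, mul_div_cancel_left₀ _ (hne t)]
      simp_rw [h1]
      simpa using ((hto1 t).const_mul (charFun (sizeBiased μ) t)).div_const (charFun μ t))
  refine ⟨ν, inferInstance, ?_, ?_⟩
  · have h1 := ProbabilityMeasure.limsup_measure_closed_le_of_tendsto hlim
      (isClosed_Ici (a := (0 : ℝ)))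
    have h2 : ∀ n, sizeBiased (ρ n) (Set.Ici 0) = 1 := fun n => by
      apply sb_ae_nonneg'
      exact (withDensity_absolutelyContinuous _ _).ae_le (hr0 n)
    simp only [ProbabilityMeasure.coe_mk, h2, limsup_const] at h1
    exact le_antisymm prob_le_one h1
  · refine Measure.ext_of_charFun (funext fun t => ?_)
    rw [sb_charFun_mconv, hν, mul_div_cancel₀ _ (hne t)]

/-- Steutel's theorem: for a nonnegative probability measure `μ` with finite positive
mean, the size-biased measure is a convolution `μ ∗ ν` with `ν` a nonnegative probability
measure iff `μ` is infinitely divisible. -/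
theorem sizeBias_indep_increment_iff_infinitelyDivisible
    (μ : Measure ℝ) [IsProbabilityMeasure μ]
    (hsupp : μ (Set.Ici 0) = 1)
    (hint : Integrable id μ)
    (ha : 0 < ∫ x, x ∂μ) :
    (∃ ν : Measure ℝ, IsProbabilityMeasure ν ∧ ν (Set.Ici 0) = 1 ∧
        sizeBiased μ = mconv μ ν) ↔
    (∀ n : ℕ, 0 < n → ∃ ρ : Measure ℝ, IsProbabilityMeasure ρ ∧ μ = convPow ρ n) := by
  constructor
  · rintro ⟨ν, hν, hν0, h⟩ n hn
    exact sb_forward μ ν (sb_ae_nonneg μ hsupp) (sb_ae_nonneg ν hν0) hint ha h n hn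
  · exact sb_backward μ (sb_ae_nonneg μ hsupp) hint ha
end

section
/- Let ν be a finite nonzero measure on [0,∞) with total mass a = ν([0,∞)) ∈ (0,∞) (viewed as a measure on ℝ supported on [0,∞)), and let μ be a probability measure on ℝ whose characteristic function satisfies φ(u) = exp( ∫_{[0,∞)} k(u,y) dν(y) ) for all real u, where k(u,y) = (e^{iuy} − 1)/y for y > 0 and k(u,0) = iu. Then μ([0,∞)) = 1, the mean of μ equals a, and the size-biased measure μ* satisfies μ* = μ ∗ (ν/a), where ν/a is the probability measure obtained by normalizing ν. -/
open MeasureTheory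

/-- The characteristic function `φ(u) = ∫ e^{iux} dμ(x)`. -/
noncomputable def charFn (μ : Measure ℝ) (u : ℝ) : ℂ :=
  ∫ x, Complex.exp (Complex.I * u * x) ∂μ

/-- The Lévy kernel `k(u,y) = (e^{iuy} - 1)/y` for `y ≠ 0`, with `k(u,0) = iu`. -/
noncomputable def levyKernel (u y : ℝ) : ℂ :=
  if y = 0 then Complex.I * u else (Complex.exp (Complex.I * u * y) - 1) / y

lemma aux_kernel_norm (u y : ℝ) : ‖levyKernel u y‖ ≤ |u| := by
  unfold levyKernel
  split_ifs with h
  · simp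
  · rw [norm_div]
    have h1 := Real.norm_exp_I_mul_ofReal_sub_one_le (x := u * y)
    have : 0 < ‖(y:ℂ)‖ := by simpa using h
    rw [div_le_iff₀ this]
    simpa [mul_assoc] using h1

lemma aux_kernel_meas (u : ℝ) : Measurable (levyKernel u) := by
  unfold levyKernel
  refine Measurable.ite (measurableSet_singleton 0) (by fun_prop) (by fun_prop)

lemma aux_kernel_deriv (u y : ℝ) :
    HasDerivAt (fun u => levyKernel u y) (Complex.I * Complex.exp (Complex.I * u * y)) u := by
  unfold levyKernel
  have hu : HasDerivAt (fun u : ℝ => (u : ℂ)) 1 u := Complex.ofRealCLM.hasDerivAt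
  split_ifs with h
  · subst h
    simpa using hu.const_mul Complex.I
  · have hy : (y : ℂ) ≠ 0 := by exact_mod_cast h
    have := ((((hu.const_mul Complex.I).mul_const (y:ℂ)).cexp).sub_const 1).div_const (y:ℂ)
    refine this.congr_deriv ?_
    rw [div_eq_iff hy]
    ring

lemma aux_kernel_cont (u : ℝ) (y : ℝ) (hy : 0 ≤ y) (e : ℕ → ℝ) (he : ∀ᶠ n in Filter.atTop, 0 < e n)
    (h0 : Filter.Tendsto e Filter.atTop (nhds 0)) :
    Filter.Tendsto (fun n => levyKernel u (max y (e n))) Filter.atTop (nhds (levyKernel u y)) := by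
  rcases hy.eq_or_lt with rfl | hy
  · have hd : HasDerivAt (fun t : ℝ => Complex.exp (Complex.I * u * t)) (Complex.I * u) 0 := by
      have hu : HasDerivAt (fun u : ℝ => (u : ℂ)) 1 0 := Complex.ofRealCLM.hasDerivAt
      simpa using ((hu.const_mul (Complex.I * u)).cexp)
    rw [hasDerivAt_iff_tendsto_slope] at hd
    have he' : Filter.Tendsto e Filter.atTop (nhdsWithin 0 {0}ᶜ) := by
      refine tendsto_nhdsWithin_iff.2 ⟨h0, ?_⟩
      filter_upwards [he] with n hn
      simpa using hn.ne'
    have := hd.comp he'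
    simp only [levyKernel, if_true]
    refine this.congr' ?_
    filter_upwards [he] with n hn
    simp only [Function.comp, slope, max_eq_right hn.le, if_neg hn.ne', vsub_eq_sub, sub_zero]
    rw [Complex.real_smul]
    simp
    ring
  · refine tendsto_const_nhds.congr' ?_
    filter_upwards [h0.eventually (gt_mem_nhds hy)] with n hn
    rw [max_eq_left hn.le]

lemma aux_rho (ν : Measure ℝ) [IsFiniteMeasure ν] (ε : ℝ) (hε : 0 < ε) (n : ℕ) (hn : 0 < n)
    (h : ν.real Set.univ ≤ ε * n) :
    ∃ ρ : Measure ℝ, IsProbabilityMeasure ρ ∧ ρ (Set.Iio 0) = 0 ∧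
      n * ∫⁻ x, ‖x‖ₑ ∂ρ ≤ ν Set.univ ∧
      ∀ u, charFun ρ u = 1 + (∫ y, levyKernel u (max y ε) ∂ν) / n := by
  have hn' : (0:ℝ) < n := by exact_mod_cast hn
  have hm : ∀ y, 0 < max y ε := fun y => lt_max_of_lt_right hε
  set d : ℝ → ENNReal := fun y => ENNReal.ofReal (1 / (n * max y ε)) with hd
  have hdm : Measurable d := by fun_prop
  set l := ν.withDensity d with hl
  have hmass : l Set.univ ≤ 1 := by
    rw [hl, withDensity_apply _ MeasurableSet.univ, Measure.restrict_univ]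
    calc ∫⁻ y, d y ∂ν ≤ ∫⁻ y, ENNReal.ofReal (1 / (n * ε)) ∂ν := by
          refine lintegral_mono fun y => ENNReal.ofReal_le_ofReal ?_
          have := le_max_right y ε
          gcongr
      _ = ENNReal.ofReal (1 / (n * ε)) * ENNReal.ofReal (ν.real Set.univ) := by
          rw [lintegral_const, ofReal_measureReal]
      _ ≤ 1 := by
          rw [← ENNReal.ofReal_mul (by positivity), ENNReal.ofReal_le_one, one_div,
            inv_mul_le_one₀ (by positivity)]
          linarith
  have : IsFiniteMeasure l := ⟨hmass.trans_lt ENNReal.one_lt_top⟩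
  have hmm : Measurable (fun y : ℝ => max y ε) := by fun_prop
  have hfin2 : IsFiniteMeasure ((1 - l Set.univ) • Measure.dirac (0:ℝ)) := by
    refine ⟨?_⟩
    simp only [Measure.smul_apply, measure_univ, smul_eq_mul, mul_one]
    exact (tsub_le_self).trans_lt ENNReal.one_lt_top
  refine ⟨l.map (fun y => max y ε) + (1 - l Set.univ) • Measure.dirac 0, ⟨?_⟩, ?_, ?_, ?_⟩
  · simp only [Measure.add_apply, Measure.smul_apply, measure_univ, smul_eq_mul, mul_one]
    rw [Measure.map_apply hmm MeasurableSet.univ, Set.preimage_univ]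
    exact add_tsub_cancel_of_le hmass
  · simp only [Measure.add_apply, Measure.smul_apply, smul_eq_mul]
    rw [Measure.map_apply hmm measurableSet_Iio, Measure.dirac_apply' _ measurableSet_Iio]
    have : (fun y : ℝ => max y ε) ⁻¹' Set.Iio 0 = ∅ := by
      ext y; simp only [Set.mem_preimage, Set.mem_Iio, Set.mem_empty_iff_false, iff_false, not_lt]
      exact (hm y).le
    simp [this]
  · rw [lintegral_add_measure, lintegral_smul_measure, lintegral_dirac' _ (by fun_prop),
      lintegral_map (by fun_prop) hmm, hl,
      lintegral_withDensity_eq_lintegral_mul _ hdm (by fun_prop)]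
    simp only [enorm_zero, smul_zero, add_zero]
    rw [← lintegral_const_mul _ (by fun_prop)]
    calc _ = ∫⁻ y, 1 ∂ν := by
          refine lintegral_congr fun y => ?_
          simp only [Pi.mul_apply, hd]
          rw [Real.enorm_of_nonneg (hm y).le, ← ENNReal.ofReal_mul (by have := hm y; positivity),
            ← ENNReal.ofReal_natCast, ← ENNReal.ofReal_mul (by positivity)]
          have := hm y
          rw [show (n:ℝ) * (1 / (n * max y ε) * max y ε) = 1 by field_simp]
          simp
      _ ≤ _ := by simp
  · intro u
    have hdt : ∀ y, (d y).toReal = 1 / (n * max y ε) := fun y =>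
      ENNReal.toReal_ofReal (by have := hm y; positivity)
    have hdms : AEStronglyMeasurable (fun y => 1 / (n * max y ε)) ν :=
      Measurable.aestronglyMeasurable (by fun_prop)
    have hdint : Integrable (fun y => 1 / (n * max y ε)) ν := by
      refine Integrable.of_bound (C := 1 / (n * ε)) hdms (ae_of_all _ fun y => ?_)
      have h1 := hm y
      rw [Real.norm_of_nonneg (by positivity)]
      have := le_max_right y ε
      gcongr
    have hlr : l.real Set.univ = ∫ y, 1 / (n * max y ε) ∂ν := by
      rw [measureReal_def, hl, withDensity_apply _ MeasurableSet.univ, Measure.restrict_univ,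
        integral_eq_lintegral_of_nonneg_ae (ae_of_all _ fun y => by have := hm y; positivity)
          hdms]
    have hb : ∀ (m : Measure ℝ) [IsFiniteMeasure m], Integrable (fun x : ℝ => Complex.exp (u * x * Complex.I)) m := by
      intro m _
      refine Integrable.of_bound (C := 1) (by fun_prop) (ae_of_all _ fun y => ?_)
      rw [← Complex.ofReal_mul, Complex.norm_exp_ofReal_mul_I]
    rw [charFun_apply_real, integral_add_measure (hb _) (hb _), integral_smul_measure,
      integral_dirac, integral_map hmm.aemeasurable (by fun_prop), hl,
      integral_withDensity_eq_integral_toReal_smul hdm (ae_of_all _ fun y => ENNReal.ofReal_lt_top)]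
    simp only [hdt]
    rw [← hl, ENNReal.toReal_sub_of_le hmass (by simp), ← measureReal_def, hlr]
    have e1 : ∀ y, levyKernel u (max y ε) = n * ((1 / (n * max y ε) : ℝ) • Complex.exp (u * (max y ε : ℝ) * Complex.I)
        - ((1 / (n * max y ε) : ℝ) : ℂ)) := by
      intro y
      have h1 : ((max y ε : ℝ):ℂ) ≠ 0 := by exact_mod_cast (hm y).ne'
      have h2 : (n:ℂ) ≠ 0 := by exact_mod_cast hn.ne'
      rw [levyKernel, if_neg (hm y).ne', Complex.real_smul]
      rw [Complex.ofReal_div, Complex.ofReal_mul, Complex.ofReal_one, Complex.ofReal_natCast]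
      rw [show Complex.I * u * (max y ε : ℝ) = u * (max y ε : ℝ) * Complex.I by ring]
      field_simp
    simp_rw [e1]
    have h2 : (n:ℂ) ≠ 0 := by exact_mod_cast hn.ne'
    rw [integral_const_mul, mul_div_cancel_left₀ _ h2, integral_sub, integral_complex_ofReal]
    · simp
      ring
    · refine hdint.norm.mono' (by fun_prop) (ae_of_all _ fun y => ?_)
      rw [norm_smul, ← Complex.ofReal_mul, Complex.norm_exp_ofReal_mul_I, mul_one]
    · exact hdint.ofReal

lemma aux_pow (ρ : Measure ℝ) [IsProbabilityMeasure ρ] (h0 : ρ (Set.Iio 0) = 0) (n : ℕ) :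
    ∃ σ : Measure ℝ, IsProbabilityMeasure σ ∧ σ (Set.Iio 0) = 0 ∧
      ∫⁻ x, ‖x‖ₑ ∂σ ≤ n * ∫⁻ x, ‖x‖ₑ ∂ρ ∧ ∀ u, charFun σ u = charFun ρ u ^ n := by
  induction n with
  | zero =>
    refine ⟨Measure.dirac 0, inferInstance, ?_, ?_, ?_⟩
    · simp [Measure.dirac_apply' _ measurableSet_Iio]
    · simp
    · simp
  | succ n ih =>
    obtain ⟨σ, hσ, h1, h2, h3⟩ := ih
    refine ⟨σ.conv ρ, inferInstance, ?_, ?_, ?_⟩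
    · rw [Measure.conv, Measure.map_apply (by fun_prop) measurableSet_Iio]
      refine measure_mono_null (t := (Set.Iio 0 ×ˢ Set.univ) ∪ (Set.univ ×ˢ Set.Iio 0)) ?_ ?_
      · rintro ⟨x, y⟩ h
        simp only [Set.mem_preimage, Set.mem_Iio] at h
        by_cases hx : x < 0
        · left; simp [hx]
        · right; simp; linarith
      · refine measure_union_null ?_ ?_ <;> simp [Measure.prod_prod, h1, h0]
    · rw [Measure.lintegral_conv (by fun_prop)]
      calc _ ≤ ∫⁻ x, ∫⁻ y, (‖x‖ₑ + ‖y‖ₑ) ∂ρ ∂σ :=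
            lintegral_mono fun x => lintegral_mono fun y => enorm_add_le _ _
        _ = ∫⁻ x, ‖x‖ₑ ∂σ + ∫⁻ y, ‖y‖ₑ ∂ρ := by
            simp_rw [lintegral_add_left (measurable_const)]
            rw [lintegral_add_right _ measurable_const]
            simp
        _ ≤ _ := by push_cast; rw [add_mul, one_mul]; gcongr
    · intro u
      rw [charFun_conv, h3, pow_succ]

lemma aux_sigma (ν : Measure ℝ) [IsFiniteMeasure ν] (a : ℝ) (ha : 0 < a)
    (hmass : ν.real Set.univ = a) (n : ℕ) :
    ∃ σ : Measure ℝ, IsProbabilityMeasure σ ∧ σ (Set.Iio 0) = 0 ∧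
      ∫⁻ x, ‖x‖ₑ ∂σ ≤ ν Set.univ ∧
      ∀ u, charFun σ u = (1 + (∫ y, levyKernel u (max y (a / √n)) ∂ν) / n) ^ n := by
  rcases Nat.eq_zero_or_pos n with rfl | hn
  · refine ⟨Measure.dirac 0, inferInstance, ?_, ?_, ?_⟩
    · simp [Measure.dirac_apply' _ measurableSet_Iio]
    · simp
    · simp
  · have hn1 : (1:ℝ) ≤ n := by exact_mod_cast hn
    have hs : (1:ℝ) ≤ √n := Real.one_le_sqrt.2 hn1
    obtain ⟨ρ, h1, h2, h3, h4⟩ := aux_rho ν (a / √n) (by positivity) n hn (by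
      rw [hmass]
      have : a / √n * n = a * √n := by
        nth_rewrite 2 [← Real.mul_self_sqrt (Nat.cast_nonneg n : (0:ℝ) ≤ n)]
        field_simp
      rw [this]
      nlinarith)
    obtain ⟨σ, g1, g2, g3, g4⟩ := aux_pow ρ h2 n
    exact ⟨σ, g1, g2, g3.trans h3, fun u => by rw [g4, h4]⟩

lemma charFn_eq (μ : Measure ℝ) (u : ℝ) : charFn μ u = charFun μ u := by
  rw [charFun_apply_real, charFn]
  congr 1
  ext x
  ring_nf

lemma aux_weak (ν : Measure ℝ) [IsFiniteMeasure ν] (hνsupp : ν (Set.Iio 0) = 0)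
    (a : ℝ) (ha : 0 < a) (hmass : ν.real Set.univ = a)
    (μ : Measure ℝ) [IsProbabilityMeasure μ]
    (hchar : ∀ u : ℝ, charFun μ u = Complex.exp (∫ y, levyKernel u y ∂ν)) :
    μ (Set.Iio 0) = 0 ∧ ∫⁻ x, ‖x‖ₑ ∂μ ≤ ν Set.univ := by
  choose σ h1 h2 h3 h4 using aux_sigma ν a ha hmass
  have hsq : Filter.Tendsto (fun n : ℕ => a / √n) Filter.atTop (nhds 0) :=
    tendsto_const_nhds.div_atTop
      (Real.tendsto_sqrt_atTop.comp tendsto_natCast_atTop_atTop)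
  have hpos : ∀ᶠ n : ℕ in Filter.atTop, 0 < a / √n := by
    filter_upwards [Filter.eventually_gt_atTop 0] with n hn
    have : (0:ℝ) < n := by exact_mod_cast hn
    positivity
  have hae : ∀ᵐ y ∂ν, 0 ≤ y := by
    rw [ae_iff]; simpa [Set.Iio] using hνsupp
  have hconv : Filter.Tendsto (β := ProbabilityMeasure ℝ) (fun n => ⟨σ n, h1 n⟩) Filter.atTop
      (nhds ⟨μ, inferInstance⟩) := by
    refine ProbabilityMeasure.tendsto_of_tendsto_charFun fun u => ?_
    simp only [ProbabilityMeasure.coe_mk]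
    simp_rw [h4]
    rw [hchar]
    refine Complex.tendsto_one_add_pow_exp_of_tendsto ?_
    have hK : Filter.Tendsto (fun n : ℕ => ∫ y, levyKernel u (max y (a / √n)) ∂ν) Filter.atTop
        (nhds (∫ y, levyKernel u y ∂ν)) := by
      refine tendsto_integral_of_dominated_convergence (fun _ => |u|) ?_ (integrable_const _) ?_ ?_
      · intro n
        exact ((aux_kernel_meas u).comp (by fun_prop)).aestronglyMeasurable
      · exact fun n => ae_of_all _ fun y => aux_kernel_norm _ _
      · filter_upwards [hae] with y hy
        exact aux_kernel_cont u y hy _ hpos hsq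
    refine hK.congr' ?_
    filter_upwards [Filter.eventually_gt_atTop 0] with n hn
    have : (n:ℂ) ≠ 0 := by exact_mod_cast hn.ne'
    field_simp
  have hopen : ∀ G, IsOpen G → μ G ≤ Filter.atTop.liminf (fun n => σ n G) := fun G hG => by
    simpa using ProbabilityMeasure.le_liminf_measure_open_of_tendsto hconv hG
  constructor
  · have := hopen (Set.Iio 0) isOpen_Iio
    simpa [h2] using this
  · have := lintegral_le_liminf_lintegral_of_forall_isOpen_measure_le_liminf_measure
      (f := fun x : ℝ => ‖x‖) continuous_norm (fun x => norm_nonneg x) hopen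
    simp only [ofReal_norm] at this
    refine this.trans ?_
    calc _ ≤ Filter.liminf (fun n : ℕ => ν Set.univ) Filter.atTop :=
          Filter.liminf_le_liminf (Filter.Eventually.of_forall h3)
      _ = _ := by simp

/-- Differentiating both sides of the representation. -/
lemma aux_deriv (ν : Measure ℝ) [IsFiniteMeasure ν]
    (μ : Measure ℝ) [IsProbabilityMeasure μ] (hint : Integrable (fun x : ℝ => x) μ)
    (hchar : ∀ u : ℝ, charFun μ u = Complex.exp (∫ y, levyKernel u y ∂ν)) (u : ℝ) :
    ∫ x : ℝ, x * Complex.exp (u * x * Complex.I) ∂μ = charFun μ u * charFun ν u := by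
  have hnorm : ∀ v x : ℝ, ‖Complex.exp (Complex.I * v * x)‖ = 1 := fun v x => by
    rw [show Complex.I * v * x = ((v * x : ℝ) : ℂ) * Complex.I by push_cast; ring,
      Complex.norm_exp_ofReal_mul_I]
  have d1 : HasDerivAt (fun v => ∫ y, levyKernel v y ∂ν)
      (∫ y : ℝ, Complex.I * Complex.exp (Complex.I * u * y) ∂ν) u := by
    refine (hasDerivAt_integral_of_dominated_loc_of_deriv_le (bound := fun _ => 1)
      (F' := fun (v y : ℝ) => Complex.I * Complex.exp (Complex.I * v * y))
      Filter.univ_mem ?_ ?_ ?_ ?_ (integrable_const _) ?_).2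
    · exact Filter.Eventually.of_forall fun v => (aux_kernel_meas v).aestronglyMeasurable
    · exact Integrable.of_bound (aux_kernel_meas u).aestronglyMeasurable |u|
        (ae_of_all _ fun y => aux_kernel_norm _ _)
    · fun_prop
    · exact ae_of_all _ fun y v _ => by simp [hnorm]
    · exact ae_of_all _ fun y v _ => aux_kernel_deriv v y
  have d2 : HasDerivAt (fun v : ℝ => ∫ x : ℝ, Complex.exp (Complex.I * v * x) ∂μ)
      (∫ x : ℝ, Complex.I * x * Complex.exp (Complex.I * u * x) ∂μ) u := by
    refine (hasDerivAt_integral_of_dominated_loc_of_deriv_le (bound := fun x => ‖x‖)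
      (F' := fun (v x : ℝ) => Complex.I * x * Complex.exp (Complex.I * v * x))
      Filter.univ_mem ?_ ?_ ?_ ?_ hint.norm ?_).2
    · exact Filter.Eventually.of_forall fun v => by fun_prop
    · exact Integrable.of_bound (by fun_prop) 1
        (ae_of_all _ fun y => (hnorm _ _).le)
    · fun_prop
    · exact ae_of_all _ fun y v _ => by simp [hnorm]
    · refine ae_of_all _ fun y v _ => ?_
      have hu : HasDerivAt (fun u : ℝ => (u : ℂ)) 1 v := Complex.ofRealCLM.hasDerivAt
      have := ((hu.const_mul Complex.I).mul_const (y:ℂ)).cexp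
      refine this.congr_deriv ?_
      ring
  have hE : (fun v : ℝ => ∫ x : ℝ, Complex.exp (Complex.I * v * x) ∂μ) =
      fun v => Complex.exp (∫ y, levyKernel v y ∂ν) := by
    ext v
    rw [← hchar, ← charFn_eq, charFn]
  rw [hE] at d2
  have := d2.unique d1.cexp
  rw [← hchar, integral_const_mul] at this
  simp_rw [mul_assoc Complex.I (_ : ℂ) (Complex.exp _)] at this
  rw [integral_const_mul] at this
  have h2 : ∫ x : ℝ, x * Complex.exp (Complex.I * u * x) ∂μ = charFun μ u * charFn ν u := by
    refine mul_left_cancel₀ Complex.I_ne_zero ?_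
    rw [this, charFn]
    ring
  rw [← charFn_eq ν, ← h2]
  congr 1
  ext x
  ring_nf

/-- If `ν` is a finite nonzero measure supported on `[0,∞)` with total mass `a ∈ (0,∞)`,
and `μ` is a probability measure with characteristic function
`φ(u) = exp(∫_{[0,∞)} k(u,y) dν(y))`, then `μ` is supported on `[0,∞)`, has mean `a`,
and its size-biased measure is `μ ∗ (ν/a)`. -/
theorem sizeBias_of_levy_representation
    (ν : Measure ℝ) [IsFiniteMeasure ν] (hνsupp : ν (Set.Iio 0) = 0)
    (a : ℝ) (ha : 0 < a) (haval : ν (Set.Ici 0) = ENNReal.ofReal a)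
    (μ : Measure ℝ) [IsProbabilityMeasure μ]
    (hchar : ∀ u : ℝ, charFn μ u =
        Complex.exp (∫ y in Set.Ici (0 : ℝ), levyKernel u y ∂ν)) :
    μ (Set.Ici 0) = 1 ∧ (∫ x, x ∂μ) = a ∧
      sizeBiased μ = mconv μ ((ENNReal.ofReal a)⁻¹ • ν) := by
  have hae : ∀ᵐ y ∂ν, y ∈ Set.Ici (0:ℝ) := by
    rw [ae_iff]; simpa [Set.Iio] using hνsupp
  rw [Measure.restrict_eq_self_of_ae_mem hae] at hchar
  have huniv : ν Set.univ = ENNReal.ofReal a := by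
    rw [← haval, ← Measure.restrict_apply_univ (Set.Ici 0), Measure.restrict_eq_self_of_ae_mem hae]
  have hmass : ν.real Set.univ = a := by
    rw [measureReal_def, huniv, ENNReal.toReal_ofReal ha.le]
  have hchar' : ∀ u : ℝ, charFun μ u = Complex.exp (∫ y, levyKernel u y ∂ν) := fun u => by
    rw [← charFn_eq, hchar]
  obtain ⟨hs, hm⟩ := aux_weak ν hνsupp a ha hmass μ hchar'
  have hint : Integrable (fun x : ℝ => x) μ :=
    ⟨by fun_prop, by
      rw [hasFiniteIntegral_iff_enorm]
      exact hm.trans_lt (measure_lt_top _ _)⟩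
  have hd := aux_deriv ν μ hint hchar'
  have hmean : ∫ x, x ∂μ = a := by
    have h0 := hd 0
    simp only [Complex.ofReal_zero, zero_mul, Complex.exp_zero, mul_one, charFun_zero,
      hmass] at h0
    have h1 : ∫ x : ℝ, (x : ℂ) ∂μ = ((∫ x, x ∂μ : ℝ) : ℂ) := integral_complex_ofReal
    rw [h1] at h0
    simpa using h0
  refine ⟨?_, hmean, ?_⟩
  · rw [← Set.compl_Iio, prob_compl_eq_one_sub measurableSet_Iio, hs, tsub_zero]
  · have hpos : ∀ᵐ x ∂μ, 0 ≤ x := by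
      rw [ae_iff]; simpa [Set.Iio] using hs
    have ha0 : ENNReal.ofReal a ≠ 0 := by simpa using ha
    have hfin : IsFiniteMeasure ((ENNReal.ofReal a)⁻¹ • ν) :=
      Measure.smul_finite ν (by simpa using ha)
    have hfin2 : IsFiniteMeasure (sizeBiased μ) := by
      unfold sizeBiased
      exact isFiniteMeasure_withDensity_ofReal (hint.div_const _).2
    have hc : mconv μ ((ENNReal.ofReal a)⁻¹ • ν) = μ.conv ((ENNReal.ofReal a)⁻¹ • ν) := rfl
    rw [hc]
    refine Measure.ext_of_charFun (funext fun u => ?_)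
    rw [charFun_conv, charFun_apply_real (μ := (ENNReal.ofReal a)⁻¹ • ν), integral_smul_measure,
      ← charFun_apply_real, charFun_apply_real (μ := sizeBiased μ), sizeBiased, hmean,
      integral_withDensity_eq_integral_toReal_smul (by fun_prop)
        (ae_of_all _ fun y => ENNReal.ofReal_lt_top)]
    have : ∫ x : ℝ, (ENNReal.ofReal (x / a)).toReal • Complex.exp (u * x * Complex.I) ∂μ
        = ∫ x : ℝ, (a:ℂ)⁻¹ * (x * Complex.exp (u * x * Complex.I)) ∂μ := by
      refine integral_congr_ae ?_
      filter_upwards [hpos] with x hx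
      rw [ENNReal.toReal_ofReal (by positivity), Complex.real_smul, Complex.ofReal_div]
      ring
    rw [this, integral_const_mul, hd, ENNReal.toReal_inv, ENNReal.toReal_ofReal ha.le,
      Complex.real_smul, Complex.ofReal_inv]
    ring
end
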